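/- arXiv:2005.02695 — 2 statements merged into one kernel-verified Lean document; each statement's English description precedes it below -/
import Mathlib

section
/- Let M be a closed z-invariant subspace of the Fréchet space Hol(𝔻), equipped with the topology of uniform convergence on compact subsets of 𝔻, such that {0} ≠ M ≠ Hol(𝔻). Then Z(M) ≠ ∅, i.e., there exists λ ∈ 𝔻 such that f(λ) = 0 for every f ∈ M. In particular, Hol(𝔻) has no nontrivial zero-free closed z-invariant subspace, and no proper nonzero closed z-invariant subspace of Hol(𝔻) has the division property. -/
noncomputable section

open Metric Set Filter Topology
open scoped Classical

/-- Functions holomorphic on the open unit disc, normalized to vanish outside it.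
This is our model of `Hol(𝔻)`. -/
def HolDisc : Set (ℂ → ℂ) :=
  {f | DifferentiableOn ℂ f (Metric.ball (0:ℂ) 1) ∧ ∀ z ∉ Metric.ball (0:ℂ) 1, f z = 0}

/-- The constant function `1` of `Hol(𝔻)` (normalized to vanish outside the disc). -/
def oneD : ℂ → ℂ := fun z => if z ∈ Metric.ball (0:ℂ) 1 then 1 else 0

/-- The shift `S`, `(Sf)(z) = z f(z)`, as a linear map. -/
def shiftL : (ℂ → ℂ) →ₗ[ℂ] (ℂ → ℂ) where
  toFun f := fun z => z * f z
  map_add' f g := by funext z; simp [mul_add]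
  map_smul' c f := by funext z; simp [smul_eq_mul]; ring

/-- Division: `f_λ(z) = (f(z) - f(λ))/(z - λ)` for `z ≠ λ`, `f_λ(λ) = f'(λ)`,
normalized to vanish outside the disc.  `fdivB 0` is the backward shift `T`. -/
def fdivB (lam : ℂ) (f : ℂ → ℂ) : ℂ → ℂ := fun z =>
  if z ∈ Metric.ball (0:ℂ) 1 then
    (if z = lam then deriv f lam else (f z - f lam) / (z - lam))
  else 0

/-- The reflected model of the shift `S⁻` on `H₀(ℂ ∖ 𝔻̄)`: a function `h` on `{|ζ|>1}`
vanishing at `∞` is represented by `k(w) = h(1/w)` (holomorphic on `𝔻`, `k 0 = 0`);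
`S⁻` corresponds to `k ↦ (k(z) - k(0))/z - k'(0)·1`. -/
def negShiftF (k : ℂ → ℂ) : ℂ → ℂ := fun z => fdivB 0 k z - deriv k 0 * oneD z

/-- `n`-th Taylor coefficient at the origin. -/
def tCoeff (n : ℕ) (f : ℂ → ℂ) : ℂ := iteratedDeriv n f 0 / (Nat.factorial n)

/-!
Polynomials are dense in `Hol` of a disc, so a closed `z`-invariant subspace `M` is an ideal of
`Hol(𝔻)`. If `Z(M) = ∅`, multiplying by difference quotients gives `M` the division property.
If `M ≠ 0` has the division property, then for each `R < 1` one can divide the finitely many zeros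
in `|z| ≤ R` out of a nonzero element of `M`, leaving `h ∈ M` without zeros there. Any
`g ∈ Hol(𝔻)` equals `(g / h) h` on `|z| < R`, where `g / h` is a limit of polynomials; so `g` is a
locally uniform limit of elements of `M`, and `M` is all of `Hol(𝔻)`.
-/

section Analysis

theorem exists_polynomial_near_of_differentiableOn_ball {F : ℂ → ℂ} {c : ℂ} {R : ℝ}
    (hF : DifferentiableOn ℂ F (ball c R)) {K : Set ℂ} (hK : IsCompact K) (hKR : K ⊆ ball c R)
    {ε : ℝ} (hε : 0 < ε) :
    ∃ p : Polynomial ℂ, ∀ z ∈ K, ‖p.eval z - F z‖ < ε := by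
  rcases K.eq_empty_or_nonempty with rfl | ⟨z₀, hz₀⟩
  · exact ⟨0, by simp⟩
  have hR : 0 < R := pos_of_mem_ball (hKR hz₀)
  obtain ⟨r, ⟨hr, hrR⟩, hKr⟩ := exists_pos_lt_subset_ball hR hK.isClosed hKR
  obtain ⟨s, hrs, hsR⟩ := exists_between hrR
  lift s to NNReal using (hr.trans hrs).le
  lift r to NNReal using hr.le
  have hseries := (hF.mono (closedBall_subset_ball hsR)).hasFPowerSeriesOnBall
    (mod_cast hr.trans hrs)
  have hunif := (hseries.tendstoUniformlyOn' (r' := r) (mod_cast hrs)).mono hKr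
  obtain ⟨n, hn⟩ := (Metric.tendstoUniformlyOn_iff.mp hunif ε hε).exists
  let a := (cauchyPowerSeries F c s).coeff
  let p : Polynomial ℂ :=
    ∑ k ∈ Finset.range n, Polynomial.C (a k) * (Polynomial.X - Polynomial.C c) ^ k
  have hp (z : ℂ) : p.eval z = (cauchyPowerSeries F c s).partialSum n (z - c) := by
    simp [p, a, Polynomial.eval_finsetSum, FormalMultilinearSeries.partialSum, mul_comm]
  exact ⟨p, fun z hz => by simpa only [hp, dist_eq_norm'] using hn z hz⟩

theorem finite_setOf_mem_and_eq_zero_of_isCompact {𝕜 E : Type*} [NontriviallyNormedField 𝕜]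
    [NormedAddCommGroup E] [NormedSpace 𝕜 E] {f : 𝕜 → E} {U K : Set 𝕜}
    (hf : AnalyticOnNhd 𝕜 f U) (hU : IsPreconnected U) (hne : ∃ x ∈ U, f x ≠ 0)
    (hK : IsCompact K) (hKU : K ⊆ U) : {z ∈ K | f z = 0}.Finite := by
  obtain ⟨x, hx, hfx⟩ := hne
  have hcodisc : f ⁻¹' {0}ᶜ ∈ codiscreteWithin K := codiscreteWithin_mono hKU
    (hf.preimage_zero_mem_codiscreteWithin hfx hx ⟨⟨x, hx⟩, hU⟩)
  refine (hK.finite_sdiff_of_mem_codiscreteWithin hcodisc).subset fun z hz => ?_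
  simpa using hz

theorem analyticOrderAt_dslope_add_one {𝕜 E : Type*} [NontriviallyNormedField 𝕜]
    [NormedAddCommGroup E] [NormedSpace 𝕜 E] {f : 𝕜 → E} {a : 𝕜}
    (hf : AnalyticAt 𝕜 f a) (hfa : f a = 0) :
    analyticOrderAt (dslope f a) a + 1 = analyticOrderAt f a := by
  have hd : AnalyticAt 𝕜 (dslope f a) a :=
    let ⟨_, hp⟩ := hf
    ⟨_, hp.has_fpower_series_dslope_fslope⟩
  have hfactor : f = (fun z => z - a) • dslope f a := by
    funext z
    simp [sub_smul_dslope, hfa]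
  conv_rhs => rw [hfactor, analyticOrderAt_smul (by fun_prop) hd]
  simp [add_comm]

end Analysis

section HolDisc

variable {f g : ℂ → ℂ} {a : ℂ}

theorem analyticOnNhd_of_mem_holDisc (hf : f ∈ HolDisc) : AnalyticOnNhd ℂ f (ball 0 1) :=
  hf.1.analyticOnNhd isOpen_ball

theorem eq_of_eqOn_ball_of_mem_holDisc (hf : f ∈ HolDisc) (hg : g ∈ HolDisc)
    (hfg : EqOn f g (ball 0 1)) : f = g := by
  funext z
  by_cases hz : z ∈ ball (0 : ℂ) 1
  · exact hfg hz
  · rw [hf.2 z hz, hg.2 z hz]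

theorem exists_ne_zero_of_mem_holDisc (hf : f ∈ HolDisc) (hne : f ≠ 0) :
    ∃ z ∈ ball (0 : ℂ) 1, f z ≠ 0 := by
  obtain ⟨z, hz⟩ := Function.ne_iff.mp hne
  exact ⟨z, by_contra fun hzU => hz (hf.2 z hzU), hz⟩

theorem analyticOrderAt_ne_top_of_mem_holDisc (hf : f ∈ HolDisc) (hne : f ≠ 0)
    (ha : a ∈ ball (0 : ℂ) 1) : analyticOrderAt f a ≠ ⊤ := by
  obtain ⟨x, hx, hfx⟩ := exists_ne_zero_of_mem_holDisc hf hne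
  have hana := analyticOnNhd_of_mem_holDisc hf
  refine hana.analyticOrderAt_ne_top_of_isPreconnected (convex_ball _ _).isPreconnected hx ha ?_
  simp [(hana x hx).analyticOrderAt_eq_zero.mpr hfx]

theorem mul_mem_holDisc (hf : f ∈ HolDisc) (hg : g ∈ HolDisc) : f * g ∈ HolDisc :=
  ⟨hf.1.mul hg.1, fun z hz => by simp [hf.2 z hz]⟩

theorem eqOn_fdivB_dslope (a : ℂ) (f : ℂ → ℂ) : EqOn (fdivB a f) (dslope f a) (ball 0 1) := by
  intro z hz
  rcases eq_or_ne z a with rfl | hza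
  · simp only [fdivB, if_pos hz, if_true, dslope_same]
  · simp only [fdivB, if_pos hz, if_neg hza, dslope_of_ne f hza, slope_def_field]

theorem fdivB_mem_holDisc (hf : f ∈ HolDisc) (ha : a ∈ ball (0 : ℂ) 1) :
    fdivB a f ∈ HolDisc := by
  refine ⟨?_, fun z hz => if_neg hz⟩
  exact ((Complex.differentiableOn_dslope (isOpen_ball.mem_nhds ha)).mpr hf.1).congr
    (eqOn_fdivB_dslope a f)

theorem sub_mul_fdivB (a : ℂ) (f : ℂ → ℂ) {z : ℂ} (hz : z ∈ ball (0 : ℂ) 1) :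
    (z - a) * fdivB a f z = f z - f a := by
  rw [eqOn_fdivB_dslope a f hz, ← smul_eq_mul, sub_smul_dslope]

theorem analyticOrderAt_fdivB_add_one (hf : f ∈ HolDisc) (ha : a ∈ ball (0 : ℂ) 1)
    (hfa : f a = 0) : analyticOrderAt (fdivB a f) a + 1 = analyticOrderAt f a := by
  have hnear : fdivB a f =ᶠ[𝓝 a] dslope f a :=
    (eqOn_fdivB_dslope a f).eventuallyEq_of_mem (isOpen_ball.mem_nhds ha)
  rw [analyticOrderAt_congr hnear,
    analyticOrderAt_dslope_add_one (analyticOnNhd_of_mem_holDisc hf a ha) hfa]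

end HolDisc

/-- Sequential closedness of a subset of `Hol(𝔻)` for the topology of uniform convergence on
compact subsets of the disc; as that topology is metrizable, this is closedness. -/
def IsClosedInHol (A : Set (ℂ → ℂ)) : Prop :=
  ∀ (u : ℕ → ℂ → ℂ) (g : ℂ → ℂ), (∀ n, u n ∈ A) → g ∈ HolDisc →
    (∀ K : Set ℂ, K ⊆ ball 0 1 → IsCompact K → TendstoUniformlyOn u g atTop K) → g ∈ A

/-- The division property: `A` is stable under dividing out a zero in the disc. -/
def HasDivisionProperty (A : Set (ℂ → ℂ)) : Prop :=
  ∀ f ∈ A, ∀ a ∈ ball (0 : ℂ) 1, f a = 0 → fdivB a f ∈ A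

/-- The common zero set `Z(A)` in the disc; `A` is zero-free when it is empty. -/
def commonZeros (A : Set (ℂ → ℂ)) : Set ℂ :=
  {a ∈ ball (0 : ℂ) 1 | ∀ f ∈ A, f a = 0}

theorem IsClosedInHol.mem_of_forall_isCompact_exists_near {A : Set (ℂ → ℂ)} {g : ℂ → ℂ}
    (hA : IsClosedInHol A) (hg : g ∈ HolDisc)
    (hnear : ∀ K ⊆ ball (0 : ℂ) 1, IsCompact K → ∀ ε > 0, ∃ u ∈ A, ∀ z ∈ K, ‖u z - g z‖ < ε) :
    g ∈ A := by
  let δ (n : ℕ) : ℝ := 1 / ((n : ℝ) + 1)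
  have hδpos (n : ℕ) : 0 < δ n := Nat.one_div_pos_of_nat
  have hδ : Tendsto δ atTop (𝓝 0) := tendsto_one_div_add_atTop_nhds_zero_nat
  have hstep (n : ℕ) : ∃ u ∈ A, ∀ z ∈ closedBall 0 (1 - δ n), ‖u z - g z‖ < δ n :=
    hnear _ (closedBall_subset_ball (sub_lt_self 1 (hδpos n))) (isCompact_closedBall _ _)
      _ (hδpos n)
  choose u hu hug using hstep
  refine hA u g hu hg fun K hK hKc => Metric.tendstoUniformlyOn_iff.mpr fun ε hε => ?_
  obtain ⟨r, hr, hKr⟩ := exists_lt_subset_ball hKc.isClosed hK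
  filter_upwards [hδ.eventually_lt_const hε, hδ.eventually_lt_const (sub_pos.mpr hr)]
    with n hnε hnr z hz
  have hzn : z ∈ closedBall 0 (1 - δ n) :=
    closedBall_subset_closedBall (by linarith) (ball_subset_closedBall (hKr hz))
  rw [dist_comm, dist_eq_norm]
  exact (hug n z hzn).trans hnε

section Division

variable {A : Set (ℂ → ℂ)} {f : ℂ → ℂ}

theorem HasDivisionProperty.exists_eq_sub_pow_mul (hA : HasDivisionProperty A)
    (hAhol : A ⊆ HolDisc) {a : ℂ} (ha : a ∈ ball (0 : ℂ) 1) {n : ℕ} (hf : f ∈ A)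
    (hn : analyticOrderAt f a = n) :
    ∃ g ∈ A, g a ≠ 0 ∧ ∀ z ∈ ball (0 : ℂ) 1, f z = (z - a) ^ n * g z := by
  have hana := analyticOnNhd_of_mem_holDisc (hAhol hf) a ha
  induction n generalizing f with
  | zero => exact ⟨f, hf, hana.analyticOrderAt_eq_zero.mp hn, by simp⟩
  | succ n ih =>
    have hfa : f a = 0 := hana.analyticOrderAt_ne_zero.mp (by simp [hn])
    have hq : fdivB a f ∈ A := hA f hf a ha hfa
    have hqn : analyticOrderAt (fdivB a f) a = n := by
      rw [← analyticOrderAt_fdivB_add_one (hAhol hf) ha hfa] at hn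
      simpa using hn
    obtain ⟨g, hg, hga, hqg⟩ := ih hq hqn (analyticOnNhd_of_mem_holDisc (hAhol hq) a ha)
    refine ⟨g, hg, hga, fun z hz => ?_⟩
    calc f z = (z - a) * fdivB a f z := by rw [sub_mul_fdivB a f hz, hfa, sub_zero]
      _ = (z - a) ^ (n + 1) * g z := by rw [hqg z hz]; ring

theorem HasDivisionProperty.exists_forall_ne_zero (hA : HasDivisionProperty A)
    (hAhol : A ⊆ HolDisc) {K : Set ℂ} (hK : IsCompact K) (hKU : K ⊆ ball 0 1)
    (hf : f ∈ A) (hne : f ≠ 0) : ∃ g ∈ A, ∀ z ∈ K, g z ≠ 0 := by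
  induction hN : {z ∈ K | f z = 0}.ncard using Nat.strong_induction_on generalizing f with
  | _ N ih =>
    by_cases! hzero : ∀ z ∈ K, f z ≠ 0
    · exact ⟨f, hf, hzero⟩
    obtain ⟨a, haK, hfa⟩ := hzero
    have hord := analyticOrderAt_ne_top_of_mem_holDisc (hAhol hf) hne (hKU haK)
    obtain ⟨g, hg, hga, hfg⟩ :=
      hA.exists_eq_sub_pow_mul hAhol (hKU haK) hf (Nat.cast_analyticOrderNatAt hord).symm
    have hfin : {z ∈ K | f z = 0}.Finite := finite_setOf_mem_and_eq_zero_of_isCompact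
      (analyticOnNhd_of_mem_holDisc (hAhol hf)) (convex_ball _ _).isPreconnected
      (exists_ne_zero_of_mem_holDisc (hAhol hf) hne) hK hKU
    have hfewer : {z ∈ K | g z = 0} ⊂ {z ∈ K | f z = 0} := by
      refine ssubset_iff_exists.mpr ⟨fun z hz => ⟨hz.1, ?_⟩, a, ⟨haK, hfa⟩, fun h => hga h.2⟩
      rw [hfg z (hKU hz.1), hz.2, mul_zero]
    exact ih _ (hN ▸ ncard_lt_ncard hfewer hfin) hg (fun h => hga (congrFun h a)) rfl

end Division

section ShiftInvariant

variable {M : Submodule ℂ (ℂ → ℂ)} {f g : ℂ → ℂ}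

theorem polynomial_mul_mem_of_mem_invtSubmodule (hS : M ∈ Module.End.invtSubmodule shiftL)
    (hf : f ∈ M) (p : Polynomial ℂ) : (fun z => p.eval z * f z) ∈ M := by
  induction p using Polynomial.induction_on' with
  | add p q hp hq => simpa only [Polynomial.eval_add, add_mul] using! M.add_mem hp hq
  | monomial n c =>
    have hpow : (fun z => z ^ n * f z) ∈ M := by
      induction n with
      | zero => simpa using hf
      | succ n ih => simpa [shiftL, pow_succ', mul_assoc] using! hS ih
    simpa [mul_assoc] using! M.smul_mem c hpow

theorem exists_mem_near_mul_of_mem_invtSubmodule (hS : M ∈ Module.End.invtSubmodule shiftL)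
    (hf : f ∈ M) {K : Set ℂ} (hK : IsCompact K) (hfK : ContinuousOn f K) {G : ℂ → ℂ}
    {c : ℂ} {R : ℝ} (hG : DifferentiableOn ℂ G (ball c R)) (hKR : K ⊆ ball c R)
    {ε : ℝ} (hε : 0 < ε) : ∃ u ∈ M, ∀ z ∈ K, ‖u z - G z * f z‖ < ε := by
  obtain ⟨C, hC⟩ := hK.exists_bound_of_continuousOn hfK
  have hC₁ : 0 < max C 1 := by positivity
  obtain ⟨p, hp⟩ :=
    exists_polynomial_near_of_differentiableOn_ball hG hK hKR (div_pos hε hC₁)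
  refine ⟨_, polynomial_mul_mem_of_mem_invtSubmodule hS hf p, fun z hz => ?_⟩
  calc ‖p.eval z * f z - G z * f z‖ = ‖p.eval z - G z‖ * ‖f z‖ := by rw [← sub_mul, norm_mul]
    _ ≤ ‖p.eval z - G z‖ * max C 1 := by gcongr; exact (hC z hz).trans (le_max_left _ _)
    _ < ε := (lt_div_iff₀ hC₁).mp (hp z hz)

theorem IsClosedInHol.mul_mem (hc : IsClosedInHol (M : Set (ℂ → ℂ)))
    (hM : (M : Set (ℂ → ℂ)) ⊆ HolDisc) (hS : M ∈ Module.End.invtSubmodule shiftL)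
    (hg : g ∈ HolDisc) (hf : f ∈ M) : g * f ∈ M :=
  hc.mem_of_forall_isCompact_exists_near (mul_mem_holDisc hg (hM hf)) fun _ hKU hK _ hε =>
    exists_mem_near_mul_of_mem_invtSubmodule hS hf hK ((hM hf).1.continuousOn.mono hKU)
      hg.1 hKU hε

theorem IsClosedInHol.hasDivisionProperty_of_commonZeros_eq_empty
    (hc : IsClosedInHol (M : Set (ℂ → ℂ))) (hM : (M : Set (ℂ → ℂ)) ⊆ HolDisc)
    (hS : M ∈ Module.End.invtSubmodule shiftL)
    (hZ : commonZeros (M : Set (ℂ → ℂ)) = ∅) : HasDivisionProperty (M : Set (ℂ → ℂ)) := by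
  intro f hf a ha hfa
  obtain ⟨g, hg, hga⟩ : ∃ g ∈ M, g a ≠ 0 := by
    by_contra! hall
    exact (hZ ▸ notMem_empty a : a ∉ commonZeros (M : Set (ℂ → ℂ))) ⟨ha, hall⟩
  have hF := fdivB_mem_holDisc (hM hf) ha
  have hG := fdivB_mem_holDisc (hM hg) ha
  -- Since `f = (z - a) f_a` and `g = g(a) + (z - a) g_a`, the `(z - a)`-terms cancel.
  have hcomb : (g a)⁻¹ • (fdivB a f * g - fdivB a g * f) ∈ M :=
    M.smul_mem _ (M.sub_mem (hc.mul_mem hM hS hF hg) (hc.mul_mem hM hS hG hf))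
  suffices fdivB a f = (g a)⁻¹ • (fdivB a f * g - fdivB a g * f) by rwa [this]
  refine eq_of_eqOn_ball_of_mem_holDisc hF (hM hcomb) fun z hz => ?_
  have hfz : f z = (z - a) * fdivB a f z := by rw [sub_mul_fdivB a f hz, hfa, sub_zero]
  have hgz : g z = g a + (z - a) * fdivB a g z := by rw [sub_mul_fdivB a g hz]; ring
  simp only [Pi.smul_apply, Pi.sub_apply, Pi.mul_apply, smul_eq_mul, hfz, hgz]
  field_simp
  ring

theorem HasDivisionProperty.holDisc_subset (hD : HasDivisionProperty (M : Set (ℂ → ℂ)))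
    (hM : (M : Set (ℂ → ℂ)) ⊆ HolDisc) (hS : M ∈ Module.End.invtSubmodule shiftL)
    (hc : IsClosedInHol (M : Set (ℂ → ℂ))) (hM0 : M ≠ ⊥) : HolDisc ⊆ M := by
  intro g hg
  obtain ⟨f, hf, hne⟩ := M.ne_bot_iff.mp hM0
  refine hc.mem_of_forall_isCompact_exists_near hg fun K hKU hK ε hε => ?_
  obtain ⟨R, hR, hKR⟩ := exists_lt_subset_ball hK.isClosed hKU
  obtain ⟨h, hh, hh0⟩ := hD.exists_forall_ne_zero hM (isCompact_closedBall 0 R)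
    (closedBall_subset_ball hR) hf hne
  have hquot : DifferentiableOn ℂ (fun z => g z / h z) (ball 0 R) :=
    (hg.1.mono (ball_subset_ball hR.le)).div ((hM hh).1.mono (ball_subset_ball hR.le))
      fun z hz => hh0 z (ball_subset_closedBall hz)
  obtain ⟨u, hu, hug⟩ := exists_mem_near_mul_of_mem_invtSubmodule hS hh hK
    ((hM hh).1.continuousOn.mono hKU) hquot hKR hε
  refine ⟨u, hu, fun z hz => ?_⟩
  simpa only [div_mul_cancel₀ (g z) (hh0 z (ball_subset_closedBall (hKR hz)))] using hug z hz

end ShiftInvariant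

/-- A nontrivial closed `z`-invariant subspace `M` of the Fréchet space
`Hol(𝔻)` (closedness expressed by stability under uniform convergence on compact subsets
of `𝔻`) has `Z(M) ≠ ∅`; in particular it is not zero-free and does not have the division
property. -/
theorem statement11
    (M : Submodule ℂ (ℂ → ℂ)) (hMhol : (M : Set (ℂ → ℂ)) ⊆ HolDisc)
    (hMS : ∀ f ∈ M, shiftL f ∈ M)
    -- M is closed in Hol(𝔻) for the topology of uniform convergence on compact subsets
    (hMclosed : ∀ (u : ℕ → (ℂ → ℂ)) (g : ℂ → ℂ), (∀ n, u n ∈ M) → g ∈ HolDisc →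
      (∀ K : Set ℂ, K ⊆ Metric.ball (0:ℂ) 1 → IsCompact K →
        TendstoUniformlyOn u g Filter.atTop K) → g ∈ M)
    (hM0 : M ≠ ⊥) (hMne : ∃ g ∈ HolDisc, g ∉ M) :
    (∃ lam ∈ Metric.ball (0:ℂ) 1, ∀ f ∈ M, f lam = 0)
    ∧ ¬ (∀ f ∈ M, ∀ lam ∈ Metric.ball (0:ℂ) 1, f lam = 0 → fdivB lam f ∈ M) := by
  have hS : M ∈ Module.End.invtSubmodule shiftL := hMS
  have hc : IsClosedInHol (M : Set (ℂ → ℂ)) := hMclosed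
  obtain ⟨g, hg, hgM⟩ := hMne
  have hnotdiv : ¬ HasDivisionProperty (M : Set (ℂ → ℂ)) :=
    fun hD => hgM (hD.holDisc_subset hMhol hS hc hM0 hg)
  have hzeros : (commonZeros (M : Set (ℂ → ℂ))).Nonempty := nonempty_iff_ne_empty.mpr
    fun hZ => hnotdiv (hc.hasDivisionProperty_of_commonZeros_eq_empty hMhol hS hZ)
  exact ⟨hzeros, hnotdiv⟩
end
end

section
/- Let F ∈ 𝓕. Then the injection F → ℋ(𝕋) is continuous; P⁺(F) = F ∩ Hol(𝔻) belongs to the class 𝓔; P⁻(F) = F ∩ H₀(ℂ∖𝔻̄) belongs to the class 𝓔⁻; consequently 𝒪(𝕋) = 𝓗(𝔻̄) ⊕ 𝓗₀(ℂ∖𝔻) ⊂ F. Moreover, if G is a closed subspace of F such that 𝐒^{-1}(G) ⊂ G, then G ∩ Hol(𝔻) has the division property. -/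
noncomputable section

open Metric Set Filter Topology
open scoped Classical

/-!
On Fourier coefficients `𝐒` acts as a translation, so the commutator `P⁺𝐒 - 𝐒P⁺` sends `f` to
`f̂(-1) · 1`. As some `f̂(-1)` is nonzero, `1 ∈ F` and `f̂(-1)` depends continuously on `f`; by
translation all coefficients do. The Laurent series `∑ cₙ 𝐒ⁿ 1` of an element of `𝒪(𝕋)` converges in
`F` because `𝐒` and `𝐒⁻¹` have spectral radius at most `1`.

The shifts and backward shifts of `F⁺` and `F⁻` are the compressions of `𝐒` and `𝐒⁻¹`. Each is a
restriction to an invariant subspace or a quotient by one, so its powers are the compressed powers,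
and the spectral radius does not increase. The quotient `f_λ` is the Neumann series
`∑ λⁿ 𝐒⁻ⁿ⁻¹ f`, whose terms lie in the closed subspace `G`.
-/

section SpectralRadius

variable {A B : Type*} [NormedRing A] [NormedAlgebra ℂ A] [NormedRing B] [NormedAlgebra ℂ B]

lemma spectralRadius_le_one_of_spectrum_subset_sphere {a : A}
    (ha : spectrum ℂ a ⊆ sphere (0 : ℂ) 1) : spectralRadius ℂ a ≤ 1 := by
  refine iSup₂_le fun z hz => ?_
  have hz' : ‖z‖₊ = 1 := NNReal.eq (by simpa using ha hz)
  simp [hz']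

lemma spectrum_units_inv_subset_sphere {u : Aˣ}
    (hu : spectrum ℂ (u : A) ⊆ sphere (0 : ℂ) 1) :
    spectrum ℂ (↑u⁻¹ : A) ⊆ sphere (0 : ℂ) 1 := by
  rw [← spectrum.map_inv]
  intro z hz
  simpa using hu hz

lemma eventually_norm_pow_le_of_spectralRadius_lt [CompleteSpace A] {a : A} {s : ℝ}
    (ha : spectralRadius ℂ a < ENNReal.ofReal s) : ∀ᶠ n : ℕ in atTop, ‖a ^ n‖ ≤ s ^ n := by
  have hs : 0 < s := ENNReal.ofReal_pos.1 (bot_le.trans_lt ha)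
  have hlim := spectrum.pow_norm_pow_one_div_tendsto_nhds_spectralRadius a
  filter_upwards [hlim.eventually_lt_const ha, eventually_ne_atTop 0] with n hn hn0
  have hroot : ‖a ^ n‖ ^ (1 / (n : ℝ)) < s := (ENNReal.ofReal_lt_ofReal_iff hs).1 hn
  rw [one_div] at hroot
  exact (Real.rpow_inv_natCast_pow (norm_nonneg _) hn0).symm.le.trans (by gcongr)

lemma spectralRadius_le_of_norm_pow_le [CompleteSpace A] [CompleteSpace B] {a : A} {b : B}
    (C : NNReal) (h : ∀ n : ℕ, ‖a ^ n‖ ≤ C * ‖b ^ n‖) :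
    spectralRadius ℂ a ≤ spectralRadius ℂ b := by
  refine iSup₂_le fun z hz => le_of_not_gt fun hlt => ?_
  obtain ⟨s, hbs, hsz⟩ := ENNReal.lt_iff_exists_nnreal_btwn.1 hlt
  have hs : (0 : ℝ) < s := by exact_mod_cast pos_of_gt hbs
  have hsz : (s : ℝ) < ‖z‖ := by exact_mod_cast hsz
  have hgrowth := tendsto_pow_atTop_atTop_of_one_lt ((one_lt_div hs).2 hsz)
  obtain ⟨n, hbn, hn⟩ := ((eventually_norm_pow_le_of_spectralRadius_lt
    (s := s) (by simpa using hbs)).and (hgrowth.eventually_gt_atTop (C * ‖(1 : A)‖))).exists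
  rw [div_pow, lt_div_iff₀ (by positivity)] at hn
  refine hn.not_ge ?_
  calc ‖z‖ ^ n = ‖z ^ n‖ := (norm_pow z n).symm
    _ ≤ ‖a ^ n‖ * ‖(1 : A)‖ :=
        spectrum.norm_le_norm_mul_of_mem (spectrum.pow_mem_pow a n hz)
    _ ≤ C * ‖b ^ n‖ * ‖(1 : A)‖ := by gcongr; exact h n
    _ ≤ C * s ^ n * ‖(1 : A)‖ := by gcongr
    _ = C * ‖(1 : A)‖ * s ^ n := by ring

lemma summable_smul_pow [CompleteSpace A] {a : A} {s : ℝ} {c : ℕ → ℂ}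
    (ha : spectralRadius ℂ a < ENNReal.ofReal s) (hc : Summable fun n => ‖c n‖ * s ^ n) :
    Summable fun n => c n • a ^ n := by
  refine hc.of_norm_bounded_eventually_nat ?_
  filter_upwards [eventually_norm_pow_le_of_spectralRadius_lt ha] with n hn
  rw [norm_smul]
  gcongr

lemma summable_smul_pow_of_norm_lt_one [CompleteSpace A] {a : A} {z : ℂ}
    (ha : spectralRadius ℂ a ≤ 1) (hz : ‖z‖ < 1) : Summable fun n : ℕ => (z • a) ^ n := by
  have hz0 := norm_nonneg z
  have hs : 1 < 2 / (1 + ‖z‖) := by rw [one_lt_div (by linarith)]; linarith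
  have hzs : ‖z‖ * (2 / (1 + ‖z‖)) < 1 := by
    rw [← mul_div_assoc, div_lt_one (by linarith)]; linarith
  simp only [smul_pow]
  refine summable_smul_pow (ha.trans_lt (ENNReal.one_lt_ofReal.2 hs)) ?_
  simp only [norm_pow, ← mul_pow]
  exact summable_geometric_of_lt_one (by positivity) hzs

end SpectralRadius

section Operators

lemma exists_mem_sub_apply_eq {𝕜 X : Type*} [NontriviallyNormedField 𝕜] [NormedAddCommGroup X]
    [NormedSpace 𝕜 X] {A : X →L[𝕜] X} (hA : Summable fun n : ℕ => A ^ n)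
    {G : Submodule 𝕜 X} (hG : IsClosed (G : Set X)) (hGA : ∀ g ∈ G, A g ∈ G)
    {f : X} (hf : f ∈ G) : ∃ g ∈ G, g - A g = f := by
  have hpow : ∀ n : ℕ, (A ^ n) f ∈ G := fun n => by
    induction n with
    | zero => exact hf
    | succ n ih => rw [pow_succ']; exact hGA _ ih
  have hsum : HasSum (fun n : ℕ => (A ^ n) f) ((∑' n : ℕ, A ^ n) f) :=
    (ContinuousLinearMap.apply 𝕜 X f).hasSum hA.hasSum
  exact ⟨_, hG.mem_of_tendsto hsum (.of_forall fun t => G.sum_mem fun n _ => hpow n),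
    DFunLike.congr_fun hA.one_sub_mul_tsum_pow f⟩

variable {X K : Type*} [NormedAddCommGroup X] [NormedSpace ℂ X] [CompleteSpace X]
  [NormedAddCommGroup K] [NormedSpace ℂ K] [CompleteSpace K] {A : X →L[ℂ] X} {T : K →L[ℂ] K}
  {J : K →L[ℂ] X} {Q : X →L[ℂ] K}

lemma spectralRadius_le_of_pow_eq_comp (h : ∀ n : ℕ, T ^ n = Q ∘L (A ^ n) ∘L J) :
    spectralRadius ℂ T ≤ spectralRadius ℂ A := by
  refine spectralRadius_le_of_norm_pow_le (‖Q‖₊ * ‖J‖₊) fun n => ?_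
  calc ‖T ^ n‖ = ‖Q ∘L (A ^ n) ∘L J‖ := by rw [h]
    _ ≤ ‖Q‖ * (‖A ^ n‖ * ‖J‖) :=
        (Q.opNorm_comp_le _).trans (by gcongr; exact (A ^ n).opNorm_comp_le J)
    _ = ↑(‖Q‖₊ * ‖J‖₊) * ‖A ^ n‖ := by push_cast; ring

lemma spectralRadius_le_of_restrict (hQJ : ∀ k, Q (J k) = k) (h : ∀ k, J (T k) = A (J k)) :
    spectralRadius ℂ T ≤ spectralRadius ℂ A := by
  have hpow : ∀ (n : ℕ) k, J ((T ^ n) k) = (A ^ n) (J k) := fun n => by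
    induction n with
    | zero => exact fun k => rfl
    | succ n ih => intro k; simp only [pow_succ', mul_apply_eq_comp, h, ih]
  refine spectralRadius_le_of_pow_eq_comp (J := J) (Q := Q) fun n =>
    ContinuousLinearMap.ext fun k => ?_
  change _ = Q ((A ^ n) (J k))
  rw [← hpow, hQJ]

lemma spectralRadius_le_of_quotient (hQJ : ∀ k, Q (J k) = k) (h : ∀ f, T (Q f) = Q (A f)) :
    spectralRadius ℂ T ≤ spectralRadius ℂ A := by
  have hpow : ∀ (n : ℕ) f, (T ^ n) (Q f) = Q ((A ^ n) f) := fun n => by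
    induction n with
    | zero => exact fun f => rfl
    | succ n ih => intro f; simp only [pow_succ', mul_apply_eq_comp, ih, h]
  refine spectralRadius_le_of_pow_eq_comp (J := J) (Q := Q) fun n =>
    ContinuousLinearMap.ext fun k => ?_
  change _ = Q ((A ^ n) (J k))
  rw [← hpow, hQJ]

end Operators

section Taylor

variable {f g : ℂ → ℂ} {r : ℝ}

lemma tCoeff_zero (f : ℂ → ℂ) : tCoeff 0 f = f 0 := by simp [tCoeff]

lemma tCoeff_one (f : ℂ → ℂ) : tCoeff 1 f = deriv f 0 := by simp [tCoeff]

lemma tCoeff_add (hf : AnalyticAt ℂ f 0) (hg : AnalyticAt ℂ g 0) (n : ℕ) :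
    tCoeff n (f + g) = tCoeff n f + tCoeff n g := by
  rw [tCoeff, iteratedDeriv_add hf.contDiffAt hg.contDiffAt, add_div, tCoeff, tCoeff]

lemma tCoeff_smul (c : ℂ) (f : ℂ → ℂ) (n : ℕ) : tCoeff n (c • f) = c * tCoeff n f := by
  rw [tCoeff, iteratedDeriv_const_smul_field, smul_eq_mul, mul_div_assoc, tCoeff]

lemma tCoeff_zero_fun (n : ℕ) : tCoeff n 0 = 0 := by
  simpa using tCoeff_smul 0 0 n

lemma tCoeff_succ_add_const (g : ℂ → ℂ) (c : ℂ) (n : ℕ) :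
    tCoeff (n + 1) (fun z => g z + c) = tCoeff (n + 1) g := by
  simp only [tCoeff, add_comm _ c, iteratedDeriv_const_add n.succ_pos]

lemma tCoeff_succ_id_mul (hg : AnalyticAt ℂ g 0) (n : ℕ) :
    tCoeff (n + 1) (fun z => z * g z) = tCoeff n g := by
  have hleibniz : iteratedDeriv (n + 1) (fun z => z * g z) 0 = (n + 1) * iteratedDeriv n g 0 := by
    rw [iteratedDeriv_fun_mul contDiffAt_fun_id hg.contDiffAt, Finset.sum_eq_single 1]
    · simp
    · intro i _ hi
      simp [iteratedDeriv_fun_id_zero, hi]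
    · simp
  have hn : (n : ℂ) + 1 ≠ 0 := n.cast_add_one_ne_zero
  rw [tCoeff, hleibniz, Nat.factorial_succ, Nat.cast_mul, Nat.cast_succ,
    mul_div_mul_left _ _ hn, tCoeff]

lemma tCoeff_succ_of_eventuallyEq (hg : AnalyticAt ℂ g 0) {c : ℂ}
    (h : f =ᶠ[𝓝 0] fun z => z * g z + c) (n : ℕ) : tCoeff (n + 1) f = tCoeff n g := by
  rw [tCoeff, h.iteratedDeriv_eq, ← tCoeff, tCoeff_succ_add_const, tCoeff_succ_id_mul hg]

lemma hasSum_tCoeff (hf : DifferentiableOn ℂ f (ball 0 r)) {z : ℂ} (hz : z ∈ ball (0 : ℂ) r) :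
    HasSum (fun n => tCoeff n f * z ^ n) (f z) := by
  have hterm : (fun n => tCoeff n f * z ^ n) =
      fun n : ℕ => (n.factorial : ℂ)⁻¹ • (z - 0) ^ n • iteratedDeriv n f 0 := by
    funext n
    simp only [tCoeff, sub_zero, smul_eq_mul]
    ring
  exact hterm ▸ Complex.hasSum_taylorSeries_on_ball hf hz

lemma eqOn_of_tCoeff_eq (hf : DifferentiableOn ℂ f (ball 0 r))
    (hg : DifferentiableOn ℂ g (ball 0 r)) (h : ∀ n, tCoeff n f = tCoeff n g) :
    EqOn f g (ball 0 r) := fun z hz =>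
  (hasSum_tCoeff hf hz).unique (by simpa only [h] using hasSum_tCoeff hg hz)

lemma summable_norm_tCoeff_mul_pow (hf : DifferentiableOn ℂ f (ball 0 r)) {s : ℝ} (hs : 0 ≤ s)
    (hsr : s < r) : Summable fun n => ‖tCoeff n f‖ * s ^ n := by
  have hmem : (s : ℂ) ∈ ball (0 : ℂ) r := by simpa [abs_of_nonneg hs] using hsr
  simpa [abs_of_nonneg hs] using (hasSum_tCoeff hf hmem).summable.norm

lemma summable_tCoeff_smul_pow {A : Type*} [NormedRing A] [NormedAlgebra ℂ A] [CompleteSpace A]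
    {a : A} (ha : spectralRadius ℂ a ≤ 1) (hr : 1 < r) (hf : DifferentiableOn ℂ f (ball 0 r)) :
    Summable fun n : ℕ => tCoeff n f • a ^ n := by
  obtain ⟨s, hs, hsr⟩ := exists_between hr
  exact summable_smul_pow (ha.trans_lt (ENNReal.one_lt_ofReal.2 hs))
    (summable_norm_tCoeff_mul_pow hf (by linarith) hsr)

end Taylor

section Disc

variable {f g k : ℂ → ℂ}

lemma analyticAt_zero_of_mem_holDisc (hf : f ∈ HolDisc) : AnalyticAt ℂ f 0 :=
  hf.1.analyticAt (ball_mem_nhds 0 one_pos)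

lemma eq_of_mem_holDisc_of_eqOn (hf : f ∈ HolDisc) (hg : g ∈ HolDisc) (h : EqOn f g (ball 0 1)) :
    f = g := by
  funext z
  by_cases hz : z ∈ ball (0 : ℂ) 1
  · exact h hz
  · rw [hf.2 z hz, hg.2 z hz]

lemma eq_fdivB_of_eqOn {lam c : ℂ} (hlam : lam ∈ ball (0 : ℂ) 1) (hg : g ∈ HolDisc)
    (h : ∀ z ∈ ball (0 : ℂ) 1, f z = (z - lam) * g z + c) : g = fdivB lam f := by
  have hf_lam : f lam = c := by simpa using h lam hlam
  have hderiv : HasDerivAt f (g lam) lam := by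
    have hg_lam := (hg.1.differentiableAt (isOpen_ball.mem_nhds hlam)).hasDerivAt
    have hmul : HasDerivAt (fun z => (z - lam) * g z + c) (g lam) lam := by
      simpa using (((hasDerivAt_id lam).sub_const lam).mul hg_lam).add_const c
    exact hmul.congr_of_eventuallyEq (eventually_of_mem (isOpen_ball.mem_nhds hlam) h)
  funext z
  rw [fdivB]
  split_ifs with hz hz_lam
  · rw [hderiv.deriv, hz_lam]
  · rw [h z hz, hf_lam, add_sub_cancel_right, mul_div_cancel_left₀ _ (sub_ne_zero.2 hz_lam)]
  · exact hg.2 z hz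

lemma eq_mul_negShiftF_add_deriv (hk : k 0 = 0) {z : ℂ} (hz : z ∈ ball (0 : ℂ) 1) :
    k z = z * (negShiftF k z + deriv k 0) := by
  rw [negShiftF, fdivB, oneD, if_pos hz, if_pos hz]
  split_ifs with h0
  · simp [h0, hk]
  · rw [hk, sub_zero, sub_zero, mul_one, sub_add_cancel, mul_div_cancel₀ _ h0]

lemma negShiftF_zero : negShiftF 0 = 0 := by
  funext z
  simp [negShiftF, fdivB]

end Disc

section FourierCoefficients

/-- The `n`-th Fourier coefficient of the hyperfunction encoded by the pair `(u, v)`: for `n < 0` it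
is read off the reflected co-analytic part `v`. -/
def hyperCoeff (u v : ℂ → ℂ) (n : ℤ) : ℂ :=
  if 0 ≤ n then tCoeff n.toNat u else tCoeff (-n).toNat v

lemma hyperCoeff_natCast (u v : ℂ → ℂ) (n : ℕ) : hyperCoeff u v n = tCoeff n u := by
  simp [hyperCoeff]

lemma hyperCoeff_neg_add_one (u v : ℂ → ℂ) (n : ℕ) :
    hyperCoeff u v (-(n + 1)) = tCoeff (n + 1) v := by
  rw [hyperCoeff, if_neg (by omega), neg_neg]
  rfl

lemma eqOn_of_hyperCoeff_eq {u v u' v' : ℂ → ℂ} {r s : ℝ} (hu : DifferentiableOn ℂ u (ball 0 r))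
    (hv : DifferentiableOn ℂ v (ball 0 s)) (hu' : DifferentiableOn ℂ u' (ball 0 r))
    (hv' : DifferentiableOn ℂ v' (ball 0 s)) (h0 : v 0 = v' 0)
    (h : ∀ n, hyperCoeff u v n = hyperCoeff u' v' n) :
    EqOn u u' (ball 0 r) ∧ EqOn v v' (ball 0 s) := by
  refine ⟨eqOn_of_tCoeff_eq hu hu' fun n => ?_, eqOn_of_tCoeff_eq hv hv' fun n => ?_⟩
  · simpa only [hyperCoeff_natCast] using h n
  · cases n with
    | zero => rw [tCoeff_zero, tCoeff_zero, h0]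
    | succ n => simpa only [hyperCoeff_neg_add_one] using h (-(n + 1))

lemma summable_hyperCoeff_smul_zpow {A : Type*} [NormedRing A] [NormedAlgebra ℂ A]
    [CompleteSpace A] {a : Aˣ} (ha : spectralRadius ℂ (a : A) ≤ 1)
    (ha' : spectralRadius ℂ (↑a⁻¹ : A) ≤ 1) {u v : ℂ → ℂ} {r r' : ℝ} (hr : 1 < r) (hr' : 1 < r')
    (hu : DifferentiableOn ℂ u (ball 0 r)) (hv : DifferentiableOn ℂ v (ball 0 r')) :
    Summable fun n : ℤ => hyperCoeff u v n • (↑(a ^ n) : A) := by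
  refine .of_nat_of_neg_add_one ?_ ?_
  · simpa [hyperCoeff_natCast] using summable_tCoeff_smul_pow ha hr hu
  · simp only [hyperCoeff_neg_add_one]
    have hinv := summable_tCoeff_smul_pow ha' hr' hv
    refine ((summable_nat_add_iff 1).2 hinv).congr fun n => ?_
    rw [zpow_neg, ← inv_zpow, ← Units.val_pow_eq_pow_val, ← zpow_natCast, Nat.cast_succ]

end FourierCoefficients

/-- A space of class `𝓕`, completeness and nontriviality being left to instance arguments. An
element `f` stands for the hyperfunction `(f⁺, f⁻)` with `f⁺ = pos f` and `f⁻(1/w) = neg f w`;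
`proj` is the projection `P⁺` and `shift` the bilateral shift `𝐒`. -/
structure HyperfunctionSpace (X : Type*) [NormedAddCommGroup X] [NormedSpace ℂ X] where
  pos : X →ₗ[ℂ] (ℂ → ℂ)
  neg : X →ₗ[ℂ] (ℂ → ℂ)
  pos_mem : ∀ f, pos f ∈ HolDisc
  neg_mem : ∀ f, neg f ∈ HolDisc ∧ neg f 0 = 0
  ext_parts : ∀ f g, pos f = pos g → neg f = neg g → f = g
  proj : X →L[ℂ] X
  proj_parts : ∀ f, pos (proj f) = pos f ∧ neg (proj f) = 0
  shift : X →L[ℂ] X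
  shift_parts : ∀ f, pos (shift f) = (fun z => z * pos f z + deriv (neg f) 0 * oneD z) ∧
    neg (shift f) = negShiftF (neg f)
  spectrum_shift : spectrum ℂ shift ⊆ sphere (0 : ℂ) 1

namespace HyperfunctionSpace

variable {X : Type*} [NormedAddCommGroup X] [NormedSpace ℂ X] (F : HyperfunctionSpace X)

section Shift

lemma pos_shift_apply (f : X) {z : ℂ} (hz : z ∈ ball (0 : ℂ) 1) :
    F.pos (F.shift f) z = z * F.pos f z + deriv (F.neg f) 0 := by
  simp only [(F.shift_parts f).1, oneD, if_pos hz, mul_one]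

lemma neg_apply_eq_mul (f : X) {z : ℂ} (hz : z ∈ ball (0 : ℂ) 1) :
    F.neg f z = z * (F.neg (F.shift f) z + deriv (F.neg f) 0) := by
  rw [(F.shift_parts f).2]
  exact eq_mul_negShiftF_add_deriv (F.neg_mem f).2 hz

lemma neg_shift_eq_zero {f : X} (hf : F.neg f = 0) : F.neg (F.shift f) = 0 := by
  rw [(F.shift_parts f).2, hf, negShiftF_zero]

lemma pos_shift_of_neg_eq_zero {f : X} (hf : F.neg f = 0) :
    F.pos (F.shift f) = shiftL (F.pos f) := by
  funext z
  simp [(F.shift_parts f).1, hf, shiftL]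

lemma isUnit_shift : IsUnit F.shift :=
  spectrum.isUnit_of_zero_notMem ℂ fun h => by simpa using F.spectrum_shift h

/-- The bilateral shift `𝐒` as an invertible operator, giving meaning to its negative powers. -/
def shiftUnit : (X →L[ℂ] X)ˣ := F.isUnit_shift.unit

/-- The inverse `𝐒⁻¹` of the bilateral shift. -/
def shiftInv : X →L[ℂ] X := ↑F.shiftUnit⁻¹

lemma shift_shiftInv (f : X) : F.shift (F.shiftInv f) = f :=
  DFunLike.congr_fun F.shiftUnit.mul_inv f

lemma pos_eq_mul_pos_shiftInv_add (f : X) {z : ℂ} (hz : z ∈ ball (0 : ℂ) 1) :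
    F.pos f z = z * F.pos (F.shiftInv f) z + deriv (F.neg (F.shiftInv f)) 0 := by
  rw [← F.pos_shift_apply _ hz, F.shift_shiftInv]

lemma pos_shiftInv (f : X) : F.pos (F.shiftInv f) = fdivB 0 (F.pos f) :=
  eq_fdivB_of_eqOn (mem_ball_self one_pos) (F.pos_mem _) fun z hz => by
    rw [sub_zero, F.pos_eq_mul_pos_shiftInv_add f hz]

lemma pos_shiftInv_eq_zero {f : X} (hf : F.pos f = 0) : F.pos (F.shiftInv f) = 0 := by
  rw [pos_shiftInv, hf]
  funext z
  simp [fdivB]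

lemma neg_shiftInv_of_pos_eq_zero {f : X} (hf : F.pos f = 0) :
    F.neg (F.shiftInv f) = shiftL (F.neg f) := by
  have hderiv : deriv (F.neg (F.shiftInv f)) 0 = 0 := by
    simpa [hf, eq_comm] using F.pos_eq_mul_pos_shiftInv_add f (mem_ball_self one_pos)
  funext z
  by_cases hz : z ∈ ball (0 : ℂ) 1
  · rw [F.neg_apply_eq_mul _ hz, F.shift_shiftInv, hderiv, add_zero]; rfl
  · simp [shiftL, (F.neg_mem _).1.2 z hz]

lemma spectralRadius_shift_le_one : spectralRadius ℂ F.shift ≤ 1 :=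
  spectralRadius_le_one_of_spectrum_subset_sphere F.spectrum_shift

lemma spectralRadius_shiftInv_le_one : spectralRadius ℂ F.shiftInv ≤ 1 :=
  spectralRadius_le_one_of_spectrum_subset_sphere
    (spectrum_units_inv_subset_sphere (u := F.shiftUnit) F.spectrum_shift)

end Shift

section Coefficients

/-- The `n`-th Fourier coefficient functional `L_n : f ↦ f̂(n)`. -/
def coeff (n : ℤ) : X →ₗ[ℂ] ℂ where
  toFun f := hyperCoeff (F.pos f) (F.neg f) n
  map_add' f g := by
    have hpos f := analyticAt_zero_of_mem_holDisc (F.pos_mem f)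
    have hneg f := analyticAt_zero_of_mem_holDisc (F.neg_mem f).1
    simp only [hyperCoeff, map_add, tCoeff_add (hpos f) (hpos g), tCoeff_add (hneg f) (hneg g)]
    split_ifs <;> rfl
  map_smul' c f := by
    simp only [hyperCoeff, map_smul, tCoeff_smul]
    split_ifs <;> rfl

lemma coeff_natCast (n : ℕ) (f : X) : F.coeff n f = tCoeff n (F.pos f) :=
  hyperCoeff_natCast (F.pos f) (F.neg f) n

lemma coeff_neg_add_one (n : ℕ) (f : X) : F.coeff (-(n + 1)) f = tCoeff (n + 1) (F.neg f) :=
  hyperCoeff_neg_add_one (F.pos f) (F.neg f) n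

lemma ext_coeff {f g : X} (h : ∀ n, F.coeff n f = F.coeff n g) : f = g := by
  obtain ⟨hpos, hneg⟩ := eqOn_of_hyperCoeff_eq (F.pos_mem f).1 (F.neg_mem f).1.1 (F.pos_mem g).1
    (F.neg_mem g).1.1 ((F.neg_mem f).2.trans (F.neg_mem g).2.symm) h
  exact F.ext_parts f g (eq_of_mem_holDisc_of_eqOn (F.pos_mem f) (F.pos_mem g) hpos)
    (eq_of_mem_holDisc_of_eqOn (F.neg_mem f).1 (F.neg_mem g).1 hneg)

lemma coeff_proj (n : ℤ) (f : X) : F.coeff n (F.proj f) = if 0 ≤ n then F.coeff n f else 0 := by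
  change hyperCoeff _ _ n = if 0 ≤ n then hyperCoeff _ _ n else 0
  rw [(F.proj_parts f).1, (F.proj_parts f).2, hyperCoeff, hyperCoeff]
  split_ifs
  · rfl
  · exact tCoeff_zero_fun _

lemma coeff_neg_one (f : X) : F.coeff (-1) f = deriv (F.neg f) 0 := by
  simpa [tCoeff_one] using F.coeff_neg_add_one 0 f

lemma coeff_shift (n : ℤ) (f : X) : F.coeff n (F.shift f) = F.coeff (n - 1) f := by
  have hdisc : ball (0 : ℂ) 1 ∈ 𝓝 0 := ball_mem_nhds 0 one_pos
  rcases n with (_ | n) | n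
  · have h := F.pos_shift_apply f (mem_ball_self one_pos)
    simpa [coeff_neg_one, tCoeff_zero, h] using F.coeff_natCast 0 (F.shift f)
  · have h := tCoeff_succ_of_eventuallyEq (analyticAt_zero_of_mem_holDisc (F.pos_mem f))
      (eventually_of_mem hdisc fun z => F.pos_shift_apply f) n
    simpa [← coeff_natCast] using h
  · have hneg := analyticAt_zero_of_mem_holDisc (F.neg_mem (F.shift f)).1
    have h := tCoeff_succ_of_eventuallyEq (f := F.neg f) (c := 0)
      (hneg.fun_add (analyticAt_const (v := deriv (F.neg f) 0)))
      (eventually_of_mem hdisc fun z hz => by simpa using F.neg_apply_eq_mul f hz) (n + 1)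
    rw [tCoeff_succ_add_const, ← coeff_neg_add_one, ← coeff_neg_add_one] at h
    rw [show Int.negSucc n = -((n : ℤ) + 1) by omega, ← h]
    exact congrArg (F.coeff · f) (by push_cast; ring)

lemma coeff_shiftInv (n : ℤ) (f : X) : F.coeff n (F.shiftInv f) = F.coeff (n + 1) f := by
  simpa [shift_shiftInv] using (F.coeff_shift (n + 1) (F.shiftInv f)).symm

lemma coeff_shiftUnit_zpow (m n : ℤ) (f : X) :
    F.coeff n ((F.shiftUnit ^ m : (X →L[ℂ] X)ˣ).val f) = F.coeff (n - m) f := by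
  induction m generalizing n with
  | zero => simp
  | succ m ih =>
    rw [add_comm, zpow_one_add, Units.val_mul, mul_apply_eq_comp]
    exact (F.coeff_shift n _).trans ((ih (n - 1)).trans (by rw [sub_sub]))
  | pred m ih =>
    rw [sub_eq_neg_add, zpow_add, zpow_neg_one, Units.val_mul, mul_apply_eq_comp]
    exact (F.coeff_shiftInv n _).trans ((ih (n + 1)).trans (congrArg (F.coeff · f) (by ring)))

end Coefficients

section Continuity

lemma proj_eq_self {f : X} (hf : F.neg f = 0) : F.proj f = f :=
  F.ext_parts _ _ (F.proj_parts f).1 ((F.proj_parts f).2.trans hf.symm)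

lemma proj_eq_zero {f : X} (hf : F.pos f = 0) : F.proj f = 0 :=
  F.ext_parts _ _ (by rw [(F.proj_parts f).1, hf, map_zero]) (by rw [(F.proj_parts f).2, map_zero])

lemma coeff_proj_shift_sub_shift_proj (n : ℤ) (f : X) :
    F.coeff n (F.proj (F.shift f) - F.shift (F.proj f)) = if n = 0 then F.coeff (-1) f else 0 := by
  rw [map_sub, coeff_proj, coeff_shift, coeff_shift, coeff_proj]
  rcases lt_trichotomy n 0 with hn | rfl | hn
  · rw [if_neg hn.not_ge, if_neg (by omega), if_neg hn.ne, sub_zero]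
  · simp
  · rw [if_pos hn.le, if_pos (by omega), if_neg hn.ne', sub_self]

variable [Nontrivial X]

lemma exists_coeff_neg_one_ne_zero : ∃ f, F.coeff (-1) f ≠ 0 := by
  by_contra! hzero
  obtain ⟨f, hf⟩ := exists_ne (0 : X)
  refine hf (F.ext_coeff fun n => ?_)
  rw [map_zero, ← hzero ((F.shiftUnit ^ (-1 - n) : (X →L[ℂ] X)ˣ).val f), coeff_shiftUnit_zpow,
    sub_sub_cancel]

lemma exists_coeff_eq_ite : ∃ e, ∀ n, F.coeff n e = if n = 0 then 1 else 0 := by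
  obtain ⟨f, hf⟩ := F.exists_coeff_neg_one_ne_zero
  refine ⟨(F.coeff (-1) f)⁻¹ • (F.proj (F.shift f) - F.shift (F.proj f)), fun n => ?_⟩
  rw [map_smul, coeff_proj_shift_sub_shift_proj, smul_ite, smul_zero, smul_eq_mul,
    inv_mul_cancel₀ hf]

lemma exists_continuousLinearMap_eq_coeff (n : ℤ) : ∃ L : X →L[ℂ] ℂ, ∀ f, L f = F.coeff n f := by
  obtain ⟨e, he⟩ := F.exists_coeff_eq_ite
  have he0 : e ≠ 0 := fun h => by simpa [h] using he 0
  obtain ⟨φ, hφ⟩ := SeparatingDual.exists_eq_one (R := ℂ) he0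
  have hcomm (f : X) : F.proj (F.shift f) - F.shift (F.proj f) = F.coeff (-1) f • e :=
    F.ext_coeff fun m => by simp [coeff_proj_shift_sub_shift_proj, he]
  refine ⟨φ ∘L (F.proj ∘L F.shift - F.shift ∘L F.proj) ∘L ↑(F.shiftUnit ^ (-1 - n)), fun f => ?_⟩
  change φ (F.proj (F.shift _) - F.shift (F.proj _)) = _
  rw [hcomm, map_smul, hφ, smul_eq_mul, mul_one]
  exact (F.coeff_shiftUnit_zpow _ _ f).trans (by rw [sub_sub_cancel])

lemma exists_coeff_eq_of_summable {c : ℤ → ℂ}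
    (hc : Summable fun n : ℤ => c n • (F.shiftUnit ^ n : (X →L[ℂ] X)ˣ).val) :
    ∃ f, ∀ n, F.coeff n f = c n := by
  obtain ⟨e, he⟩ := F.exists_coeff_eq_ite
  refine ⟨(∑' n : ℤ, c n • (F.shiftUnit ^ n : (X →L[ℂ] X)ˣ).val) e, fun m => ?_⟩
  obtain ⟨L, hL⟩ := F.exists_continuousLinearMap_eq_coeff m
  have hsum := (L ∘L ContinuousLinearMap.apply ℂ X e).hasSum hc.hasSum
  have hterm : ∀ n : ℤ, (L ∘L ContinuousLinearMap.apply ℂ X e)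
      (c n • (F.shiftUnit ^ n : (X →L[ℂ] X)ˣ).val) = if n = m then c m else 0 := by
    intro n
    change L (c n • (F.shiftUnit ^ n : (X →L[ℂ] X)ˣ).val e) = _
    rw [map_smul, hL, coeff_shiftUnit_zpow, he, smul_ite, smul_zero, smul_eq_mul, mul_one]
    grind
  simp only [hterm] at hsum
  rw [← hL]
  exact hsum.unique (hasSum_ite_eq m (c m))

lemma exists_eqOn_of_differentiableOn [CompleteSpace X] {g k : ℂ → ℂ}
    (hg : ∃ r : ℝ, 1 < r ∧ DifferentiableOn ℂ g (ball 0 r))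
    (hk : ∃ r : ℝ, 1 < r ∧ DifferentiableOn ℂ k (ball 0 r)) (hk0 : k 0 = 0) :
    ∃ f, EqOn (F.pos f) g (ball 0 1) ∧ EqOn (F.neg f) k (ball 0 1) := by
  obtain ⟨r, hr, hg⟩ := hg
  obtain ⟨s, hs, hk⟩ := hk
  obtain ⟨f, hf⟩ := F.exists_coeff_eq_of_summable (summable_hyperCoeff_smul_zpow (a := F.shiftUnit)
    F.spectralRadius_shift_le_one F.spectralRadius_shiftInv_le_one hr hs hg hk)
  exact ⟨f, eqOn_of_hyperCoeff_eq (F.pos_mem f).1 (F.neg_mem f).1.1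
    (hg.mono (ball_subset_ball hr.le)) (hk.mono (ball_subset_ball hs.le))
    ((F.neg_mem f).2.trans hk0.symm) hf⟩

end Continuity

section Parts

lemma ker_neg_eq_ker : LinearMap.ker F.neg = (1 - F.proj).ker := by
  ext f
  exact ⟨fun hf => sub_eq_zero.2 (F.proj_eq_self hf).symm,
    fun hf => (congrArg F.neg (sub_eq_zero.1 hf)).trans (F.proj_parts f).2⟩

lemma ker_pos_eq_ker_proj : LinearMap.ker F.pos = F.proj.ker := by
  ext f
  refine ⟨F.proj_eq_zero, fun hf => ?_⟩
  rw [LinearMap.mem_ker, ← (F.proj_parts f).1, show F.proj f = 0 from hf, map_zero]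

lemma isClosed_ker_neg : IsClosed (LinearMap.ker F.neg : Set X) := by
  rw [ker_neg_eq_ker]
  exact (1 - F.proj).isClosed_ker

lemma isClosed_ker_pos : IsClosed (LinearMap.ker F.pos : Set X) := by
  rw [ker_pos_eq_ker_proj]
  exact F.proj.isClosed_ker

/-- The projection `P⁺` as an operator onto `F⁺ = F ∩ Hol(𝔻)`. -/
def projPos : X →L[ℂ] LinearMap.ker F.neg :=
  F.proj.codRestrict _ fun f => (F.proj_parts f).2

/-- The projection `P⁻ = 1 - P⁺` as an operator onto `F⁻ = F ∩ H₀(ℂ∖𝔻̄)`. -/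
def projNeg : X →L[ℂ] LinearMap.ker F.pos :=
  (1 - F.proj).codRestrict _ fun f => by
    change F.pos (f - F.proj f) = 0
    rw [map_sub, (F.proj_parts f).1, sub_self]

lemma pos_projPos (f : X) : F.pos (F.projPos f) = F.pos f := (F.proj_parts f).1

lemma neg_projNeg (f : X) : F.neg (F.projNeg f) = F.neg f := by
  change F.neg (f - F.proj f) = F.neg f
  rw [map_sub, (F.proj_parts f).2, sub_zero]

lemma ker_neg_ext {f g : LinearMap.ker F.neg} (h : F.pos f = F.pos g) : f = g :=
  Subtype.ext (F.ext_parts _ _ h (f.2.trans g.2.symm))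

lemma ker_pos_ext {f g : LinearMap.ker F.pos} (h : F.neg f = F.neg g) : f = g :=
  Subtype.ext (F.ext_parts _ _ (f.2.trans g.2.symm) h)

lemma projPos_coe (f : LinearMap.ker F.neg) : F.projPos f = f :=
  F.ker_neg_ext (F.pos_projPos f)

lemma projNeg_coe (f : LinearMap.ker F.pos) : F.projNeg f = f :=
  F.ker_pos_ext (F.neg_projNeg f)

/-- The shift `S` on `F⁺`, as the compression of `𝐒`. -/
def shiftPos : LinearMap.ker F.neg →L[ℂ] LinearMap.ker F.neg :=
  F.projPos ∘L F.shift ∘L (LinearMap.ker F.neg).subtypeL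

/-- The backward shift `T` on `F⁺`, as the compression of `𝐒⁻¹`. -/
def backwardShiftPos : LinearMap.ker F.neg →L[ℂ] LinearMap.ker F.neg :=
  F.projPos ∘L F.shiftInv ∘L (LinearMap.ker F.neg).subtypeL

/-- The shift `S⁻` on `F⁻`, as the compression of `𝐒`. -/
def shiftNeg : LinearMap.ker F.pos →L[ℂ] LinearMap.ker F.pos :=
  F.projNeg ∘L F.shift ∘L (LinearMap.ker F.pos).subtypeL

/-- The backward shift `T⁻` on `F⁻`, as the compression of `𝐒⁻¹`. -/
def backwardShiftNeg : LinearMap.ker F.pos →L[ℂ] LinearMap.ker F.pos :=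
  F.projNeg ∘L F.shiftInv ∘L (LinearMap.ker F.pos).subtypeL

lemma coe_shiftPos (f : LinearMap.ker F.neg) : (F.shiftPos f : X) = F.shift f :=
  F.proj_eq_self (F.neg_shift_eq_zero f.2)

lemma coe_backwardShiftNeg (f : LinearMap.ker F.pos) : (F.backwardShiftNeg f : X) = F.shiftInv f :=
  (congrArg (F.shiftInv f - ·) (F.proj_eq_zero (F.pos_shiftInv_eq_zero f.2))).trans (sub_zero _)

lemma pos_shiftPos (f : LinearMap.ker F.neg) : F.pos (F.shiftPos f) = shiftL (F.pos f) := by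
  rw [coe_shiftPos, F.pos_shift_of_neg_eq_zero f.2]

lemma pos_backwardShiftPos (f : LinearMap.ker F.neg) :
    F.pos (F.backwardShiftPos f) = fdivB 0 (F.pos f) :=
  (F.pos_projPos _).trans (F.pos_shiftInv f)

lemma neg_shiftNeg (f : LinearMap.ker F.pos) : F.neg (F.shiftNeg f) = negShiftF (F.neg f) :=
  (F.neg_projNeg _).trans (F.shift_parts f).2

lemma neg_backwardShiftNeg (f : LinearMap.ker F.pos) :
    F.neg (F.backwardShiftNeg f) = shiftL (F.neg f) := by
  rw [coe_backwardShiftNeg, F.neg_shiftInv_of_pos_eq_zero f.2]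

lemma backwardShiftPos_projPos (f : X) :
    F.backwardShiftPos (F.projPos f) = F.projPos (F.shiftInv f) :=
  F.ker_neg_ext (by rw [pos_backwardShiftPos, pos_projPos, pos_projPos, pos_shiftInv])

lemma shiftNeg_projNeg (f : X) : F.shiftNeg (F.projNeg f) = F.projNeg (F.shift f) :=
  F.ker_pos_ext (by rw [neg_shiftNeg, neg_projNeg, neg_projNeg, (F.shift_parts f).2])

variable [CompleteSpace X]

instance : CompleteSpace (LinearMap.ker F.neg) := F.isClosed_ker_neg.completeSpace_coe

instance : CompleteSpace (LinearMap.ker F.pos) := F.isClosed_ker_pos.completeSpace_coe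

lemma spectralRadius_shiftPos_le_one : spectralRadius ℂ F.shiftPos ≤ 1 :=
  calc spectralRadius ℂ F.shiftPos ≤ spectralRadius ℂ F.shift :=
        spectralRadius_le_of_restrict (J := (LinearMap.ker F.neg).subtypeL)
          F.projPos_coe F.coe_shiftPos
    _ ≤ 1 := F.spectralRadius_shift_le_one

lemma spectralRadius_backwardShiftPos_le_one : spectralRadius ℂ F.backwardShiftPos ≤ 1 :=
  calc spectralRadius ℂ F.backwardShiftPos ≤ spectralRadius ℂ F.shiftInv :=
        spectralRadius_le_of_quotient (J := (LinearMap.ker F.neg).subtypeL)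
          F.projPos_coe F.backwardShiftPos_projPos
    _ ≤ 1 := F.spectralRadius_shiftInv_le_one

lemma spectralRadius_shiftNeg_le_one : spectralRadius ℂ F.shiftNeg ≤ 1 :=
  calc spectralRadius ℂ F.shiftNeg ≤ spectralRadius ℂ F.shift :=
        spectralRadius_le_of_quotient (J := (LinearMap.ker F.pos).subtypeL)
          F.projNeg_coe F.shiftNeg_projNeg
    _ ≤ 1 := F.spectralRadius_shift_le_one

lemma spectralRadius_backwardShiftNeg_le_one : spectralRadius ℂ F.backwardShiftNeg ≤ 1 :=
  calc spectralRadius ℂ F.backwardShiftNeg ≤ spectralRadius ℂ F.shiftInv :=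
        spectralRadius_le_of_restrict (J := (LinearMap.ker F.pos).subtypeL)
          F.projNeg_coe F.coe_backwardShiftNeg
    _ ≤ 1 := F.spectralRadius_shiftInv_le_one

end Parts

section Division

variable {F} {lam : ℂ} {f g : X}

lemma eq_fdivB_of_shift_sub_smul_eq (hlam : lam ∈ ball (0 : ℂ) 1) (h : F.shift g - lam • g = f)
    (hf : F.neg f = 0) (hf_lam : F.pos f lam = 0) :
    F.neg g = 0 ∧ F.pos g = fdivB lam (F.pos f) := by
  have hshift : F.shift g = f + lam • g := by rw [← h, sub_add_cancel]
  have hpos : ∀ z ∈ ball (0 : ℂ) 1,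
      F.pos f z = (z - lam) * F.pos g z + deriv (F.neg g) 0 := fun z hz => by
    have hpos_shift := F.pos_shift_apply g hz
    simp only [hshift, map_add, map_smul, Pi.add_apply, Pi.smul_apply, smul_eq_mul]
      at hpos_shift
    linear_combination hpos_shift
  have hderiv : deriv (F.neg g) 0 = 0 := by
    simpa [hf_lam, eq_comm] using hpos lam hlam
  have hneg : ∀ z ∈ ball (0 : ℂ) 1, (1 - z * lam) * F.neg g z = 0 := fun z hz => by
    have hneg_shift := F.neg_apply_eq_mul g hz
    simp only [hshift, map_add, map_smul, hf, hderiv, zero_add, add_zero, Pi.smul_apply,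
      smul_eq_mul] at hneg_shift
    linear_combination hneg_shift
  refine ⟨eq_of_mem_holDisc_of_eqOn (F.neg_mem g).1 ⟨differentiableOn_const 0, fun _ _ => rfl⟩
    fun z hz => ?_, eq_fdivB_of_eqOn hlam (F.pos_mem g) hpos⟩
  refine (mul_eq_zero.1 (hneg z hz)).resolve_left fun h1 => ?_
  rw [mem_ball_zero_iff] at hz hlam
  have hone : ‖z‖ * ‖lam‖ = 1 := by rw [← norm_mul, ← sub_eq_zero.1 h1, norm_one]
  nlinarith [norm_nonneg z, norm_nonneg lam]

lemma exists_mem_eq_fdivB [CompleteSpace X] {G : Submodule ℂ X} (hG : IsClosed (G : Set X))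
    (hGS : ∀ f, F.shift f ∈ G → f ∈ G) (hfG : f ∈ G) (hf : F.neg f = 0)
    (hlam : lam ∈ ball (0 : ℂ) 1) (hf_lam : F.pos f lam = 0) :
    ∃ g ∈ G, F.neg g = 0 ∧ F.pos g = fdivB lam (F.pos f) := by
  have hinv : ∀ g ∈ G, F.shiftInv g ∈ G := fun g hg => hGS _ (by rwa [shift_shiftInv])
  have hsum := summable_smul_pow_of_norm_lt_one F.spectralRadius_shiftInv_le_one
    (mem_ball_zero_iff.1 hlam)
  obtain ⟨v, hv, hvf⟩ := exists_mem_sub_apply_eq hsum hG (fun g hg => G.smul_mem lam (hinv g hg))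
    hfG
  refine ⟨F.shiftInv v, hinv v hv, eq_fdivB_of_shift_sub_smul_eq hlam ?_ hf hf_lam⟩
  rw [shift_shiftInv]
  exact hvf

end Division

end HyperfunctionSpace

/-- (Proposition 5.3 (i)) Let `F ∈ 𝓕` be a Banach space of
hyperfunctions on `𝕋`.  A hyperfunction is encoded by the pair `(ιp f, ιm f)` where
`ιp f ∈ Hol(𝔻)` is the analytic part and `ιm f`, with `ιm f 0 = 0`, is the reflection
`k(w) = f⁻(1/w)` of the co-analytic part.  Then: the coefficient functionals are
continuous (the injection `F → ℋ(𝕋)` is continuous); `P⁺(F) = F ∩ Hol(𝔻) ∈ 𝓔`;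
`P⁻(F) = F ∩ H₀(ℂ∖𝔻̄) ∈ 𝓔⁻`; `𝒪(𝕋) ⊆ F`; and `G ∩ Hol(𝔻)` has the division property
for every closed subspace `G` of `F` with `𝐒⁻¹(G) ⊆ G`. -/
theorem statement12
    {X : Type*} [NormedAddCommGroup X] [NormedSpace ℂ X] [CompleteSpace X] [Nontrivial X]
    (ιp ιm : X →ₗ[ℂ] (ℂ → ℂ))
    (hp : ∀ f : X, ιp f ∈ HolDisc)
    (hm : ∀ f : X, ιm f ∈ HolDisc ∧ ιm f 0 = 0)
    (hinj : ∀ f g : X, ιp f = ιp g → ιm f = ιm g → f = g)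
    (PB : X →L[ℂ] X) (hPB : ∀ f : X, ιp (PB f) = ιp f ∧ ιm (PB f) = 0)
    (SB : X →L[ℂ] X)
    (hSB : ∀ f : X, ιp (SB f) = (fun z => z * ιp f z + deriv (ιm f) 0 * oneD z)
                  ∧ ιm (SB f) = negShiftF (ιm f))
    (hspec : spectrum ℂ SB ⊆ Metric.sphere (0:ℂ) 1) :
    -- the Fourier-coefficient functionals Lₙ are continuous
    (∀ n : ℤ, ∃ L : X →L[ℂ] ℂ, ∀ f : X,
        L f = if 0 ≤ n then tCoeff n.toNat (ιp f) else tCoeff (-n).toNat (ιm f))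
    -- P⁺(F) = F ∩ Hol(𝔻)
    ∧ (∀ f : X, PB f ∈ LinearMap.ker ιm) ∧ (∀ f ∈ LinearMap.ker ιm, PB f = f)
    -- F⁺ := F ∩ Hol(𝔻) is closed and belongs to the class 𝓔
    ∧ IsClosed ((LinearMap.ker ιm : Submodule ℂ X) : Set X)
    ∧ (∃ Sp Tp : ↥(LinearMap.ker ιm) →L[ℂ] ↥(LinearMap.ker ιm),
        (∀ f : ↥(LinearMap.ker ιm), ιp ↑(Sp f) = shiftL (ιp ↑f))
        ∧ (∀ f : ↥(LinearMap.ker ιm), ιp ↑(Tp f) = fdivB 0 (ιp ↑f))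
        ∧ spectralRadius ℂ Sp ≤ 1 ∧ spectralRadius ℂ Tp ≤ 1)
    -- F⁻ := F ∩ H₀(ℂ∖𝔻̄) is closed and belongs to the class 𝓔⁻
    ∧ IsClosed ((LinearMap.ker ιp : Submodule ℂ X) : Set X)
    ∧ (∃ Sm Tm : ↥(LinearMap.ker ιp) →L[ℂ] ↥(LinearMap.ker ιp),
        (∀ u : ↥(LinearMap.ker ιp), ιm ↑(Sm u) = negShiftF (ιm ↑u))
        ∧ (∀ u : ↥(LinearMap.ker ιp), ιm ↑(Tm u) = shiftL (ιm ↑u))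
        ∧ spectralRadius ℂ Sm ≤ 1 ∧ spectralRadius ℂ Tm ≤ 1)
    -- 𝒪(𝕋) ⊆ F
    ∧ (∀ g k : ℂ → ℂ,
        (∃ r : ℝ, 1 < r ∧ DifferentiableOn ℂ g (Metric.ball (0:ℂ) r)) →
        (∃ r : ℝ, 1 < r ∧ DifferentiableOn ℂ k (Metric.ball (0:ℂ) r)) → k 0 = 0 →
        ∃ f : X, Set.EqOn (ιp f) g (Metric.ball (0:ℂ) 1)
          ∧ Set.EqOn (ιm f) k (Metric.ball (0:ℂ) 1))
    -- if G is closed and 𝐒⁻¹(G) ⊆ G then G ∩ Hol(𝔻) has the division property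
    ∧ (∀ G : Submodule ℂ X, IsClosed (G : Set X) → (∀ f : X, SB f ∈ G → f ∈ G) →
        ∀ f ∈ G, ιm f = 0 → ∀ lam ∈ Metric.ball (0:ℂ) 1, ιp f lam = 0 →
          ∃ g ∈ G, ιm g = 0 ∧ ιp g = fdivB lam (ιp f)) := by
  let F : HyperfunctionSpace X := ⟨ιp, ιm, hp, hm, hinj, PB, hPB, SB, hSB, hspec⟩
  refine ⟨F.exists_continuousLinearMap_eq_coeff, fun f => (hPB f).2, fun f => F.proj_eq_self,
    F.isClosed_ker_neg, ?_, F.isClosed_ker_pos, ?_, fun g k => F.exists_eqOn_of_differentiableOn,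
    fun G hG hGS f hfG hf lam hlam hf_lam =>
      F.exists_mem_eq_fdivB hG hGS hfG hf hlam hf_lam⟩
  · exact ⟨F.shiftPos, F.backwardShiftPos, F.pos_shiftPos, F.pos_backwardShiftPos,
      F.spectralRadius_shiftPos_le_one, F.spectralRadius_backwardShiftPos_le_one⟩
  · exact ⟨F.shiftNeg, F.backwardShiftNeg, F.neg_shiftNeg, F.neg_backwardShiftNeg,
      F.spectralRadius_shiftNeg_le_one, F.spectralRadius_backwardShiftNeg_le_one⟩
end
end
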